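/- arXiv:2408.06873 — 2 statements merged into one kernel-verified Lean document; each statement's English description precedes it below -/
import Mathlib

section
/- MoV_BO satisfies neither w-degree-consistency nor equal-w-degree-consistency: there exist an n, an n-weighted tournament T and alternatives x,y with wdeg(x) > wdeg(y) but MoV_BO(x,T) < MoV_BO(y,T); and there exist an n, an n-weighted tournament T' and alternatives x,y with wdeg(x) = wdeg(y) but MoV_BO(x,T') ≠ MoV_BO(y,T'). -/
/-!
Both parts use the tournament `exT n q t` on four alternatives `0, 1, 2, 3`, with Borda scores
`2n`, `n + q`, `n + t`, `2n - q - t`. Alternative `0` is the unique Borda winner in the cases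
used, and the direct comparison with it is saturated in opposite directions for `1` and `2`:
`w(1, 0) = n` whereas `w(2, 0) = 0`.

A unit of reversal closes the gap between a challenger and the winner by two points if it is
spent on their direct comparison in the challenger's favour, and by at most one point otherwise.
Alternative `1` cannot gain anything more against `0`, so it pays its full gap `n - q`
(`MoV_one_le`), while `2` only has to pay half of its gap `n - t` (`le_MoV_two`).
For `(n, q, t) = (5, 2, 1)` the scores of `1` and `2` are `7 > 6`, but their margins of victory
are at most `-3` and at least `-2`. For `(n, q, t) = (3, 1, 1)` both scores are `4`, and the
margins of victory are at most `-2` and at least `-1`.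
-/


/-- An `n`-weighted tournament on vertex set `V`. -/
structure WTournament (V : Type) (n : ℕ) where
  w : V → V → ℤ
  diag : ∀ x, w x x = 0
  nonneg : ∀ x y, x ≠ y → 0 ≤ w x y
  compl : ∀ x y, x ≠ y → w x y + w y x = (n : ℤ)

namespace WTournament

variable {V : Type} {n : ℕ}

/-- The (majority) margin of `x` over `y`. -/
def margin (T : WTournament V n) (x y : V) : ℤ :=
  T.w x y - T.w y x

/-- The Borda score of `x`. -/
def sBO [Fintype V] (T : WTournament V n) (x : V) : ℤ :=
  ∑ z, T.w x z

/-- The set of Borda winners. -/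
def BO [Fintype V] (T : WTournament V n) : Set V :=
  {x | ∀ y, T.sBO y ≤ T.sBO x}

/-- The weighted outdegree of `x`. -/
def wdeg [Fintype V] (T : WTournament V n) (x : V) : ℤ :=
  ∑ z, T.w x z

/-- `x` w-covers `y`. -/
def WCovers (T : WTournament V n) (x y : V) : Prop :=
  0 < T.margin x y ∧ ∀ z, z ≠ x → z ≠ y → T.w y z ≤ T.w x z

/-- The weighted uncovered set. -/
def wUC (T : WTournament V n) : Set V :=
  {x | ∀ y, ¬ T.WCovers y x}

/-- The consecutive edges of a vertex sequence. -/
def seqEdges (l : List V) : List (V × V) :=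
  l.zip l.tail

/-- A dominance cycle. -/
def IsDominanceCycle (T : WTournament V n) (l : List V) : Prop :=
  2 ≤ l.length ∧ l.head? = l.getLast? ∧ ∀ e ∈ seqEdges l, 0 < T.margin e.1 e.2

/-- The splitting number of a cycle. -/
def splitNum (T : WTournament V n) (l : List V) : ℤ :=
  ((seqEdges l).map fun e => T.margin e.1 e.2).foldr min (n : ℤ)

/-- `e` is a splitting edge of the cycle `l`. -/
def IsSplittingEdge (T : WTournament V n) (l : List V) (e : V × V) : Prop :=
  e ∈ seqEdges l ∧ T.margin e.1 e.2 = T.splitNum l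

/-- `(x, y)` is an edge of the margin graph surviving the deletion of every splitting
edge of every dominance cycle (i.e. an edge of `M_D`). -/
def EdgeMD (T : WTournament V n) (x y : V) : Prop :=
  0 < T.margin x y ∧
    ¬ ∃ l : List V, T.IsDominanceCycle l ∧ T.IsSplittingEdge l (x, y)

/-- The set of Split Cycle winners. -/
def SC (T : WTournament V n) : Set V :=
  {x | ∀ y, ¬ T.EdgeMD y x}

/-- A reversal function for the tournament `T`. -/
structure Reversal (T : WTournament V n) where
  r : V → V → ℤ
  antisymm : ∀ x y, r x y = - r y x
  lo : ∀ x y, x ≠ y → 0 ≤ T.w x y + r x y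
  hi : ∀ x y, x ≠ y → T.w x y + r x y ≤ (n : ℤ)

/-- The size of a reversal function. -/
def Reversal.size [Fintype V] {T : WTournament V n} (R : Reversal T) : ℤ :=
  ∑ x : V, ∑ y : V, max (R.r x y) 0

/-- The tournament obtained from `T` by the reversal `R`. -/
def apply (T : WTournament V n) (R : Reversal T) : WTournament V n :=
  { w := fun x y => T.w x y + R.r x y
    diag := fun x => by
      have h := R.antisymm x x
      have h1 := T.diag x
      show T.w x x + R.r x x = 0
      linarith
    nonneg := fun x y h => R.lo x y h
    compl := fun x y h => by
      have h1 := R.antisymm x y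
      have h2 := T.compl x y h
      show (T.w x y + R.r x y) + (T.w y x + R.r y x) = (n : ℤ)
      linarith }

/-- `R` witnesses the margin of victory of `a`: it is a destructive reversal set if
`a` is a winner and a constructive reversal set if `a` is a non-winner. -/
def IsMoVWitness (S : WTournament V n → Set V) (T : WTournament V n) (a : V)
    (R : Reversal T) : Prop :=
  a ∈ S T ↔ a ∉ S (T.apply R)

open Classical in
/-- The margin of victory of `a` in `T` with respect to the tournament solution `S`:
the minimum size of a destructive reversal set for winners, and minus the minimum
size of a constructive reversal set for non-winners. -/
noncomputable def MoV [Fintype V] (S : WTournament V n → Set V)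
    (T : WTournament V n) (a : V) : ℤ :=
  if a ∈ S T then
    sInf {k : ℤ | ∃ R : Reversal T, IsMoVWitness S T a R ∧ R.size = k}
  else
    - sInf {k : ℤ | ∃ R : Reversal T, IsMoVWitness S T a R ∧ R.size = k}

/-- The reversal values with `R (a, b) = 1`, `R (b, a) = -1` and `0` elsewhere. -/
def singleFun [DecidableEq V] (a b : V) : V → V → ℤ := fun p q =>
  if p = a ∧ q = b then 1 else if p = b ∧ q = a then -1 else 0

/-- The reversal values with `Q (b, c) = -1`, `Q (c, b) = 1`, `Q (a, c) = 1`,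
`Q (c, a) = -1` and `0` elsewhere. -/
def transferFun [DecidableEq V] (a b c : V) : V → V → ℤ := fun p q =>
  if p = b ∧ q = c then -1
  else if p = c ∧ q = b then 1
  else if p = a ∧ q = c then 1
  else if p = c ∧ q = a then -1
  else 0

/-- A monotonic tournament solution. -/
def IsMonotonic [DecidableEq V] (S : WTournament V n → Set V) : Prop :=
  ∀ (T : WTournament V n) (a b : V) (R : Reversal T),
    a ≠ b → a ∈ S T → T.w a b < (n : ℤ) → R.r = singleFun a b →
    a ∈ S (T.apply R)

/-- A transfer-monotonic tournament solution. -/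
def IsTransferMonotonic [DecidableEq V] (S : WTournament V n → Set V) : Prop :=
  ∀ (T : WTournament V n) (a b c : V) (Q : Reversal T),
    a ≠ b → a ≠ c → b ≠ c → a ∈ S T → 0 < T.w b c → T.w a c < (n : ℤ) →
    Q.r = transferFun a b c → a ∈ S (T.apply Q)

end WTournament

namespace WTournament

theorem Reversal.size_nonneg {V : Type} {n : ℕ} [Fintype V] {T : WTournament V n}
    (R : Reversal T) : 0 ≤ R.size :=
  Finset.sum_nonneg fun _ _ => Finset.sum_nonneg fun _ _ => le_max_right _ _

theorem neg_size_le_MoV {V : Type} {n : ℕ} [Fintype V] {S : WTournament V n → Set V}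
    {T : WTournament V n} {a : V} (ha : a ∉ S T) (R : Reversal T) (hR : a ∈ S (T.apply R)) :
    -R.size ≤ MoV S T a := by
  rw [MoV, if_neg ha]
  refine neg_le_neg (csInf_le ⟨0, ?_⟩ ⟨R, ?_, rfl⟩)
  · rintro _ ⟨R', -, rfl⟩
    exact R'.size_nonneg
  · simp [IsMoVWitness, ha, hR]

/-- The reversal `R` only guarantees that the set of sizes is nonempty, so that its infimum in
`ℤ` is not a junk value. -/
theorem MoV_le_neg {V : Type} {n : ℕ} [Fintype V] {S : WTournament V n → Set V}
    {T : WTournament V n} {a : V} (ha : a ∉ S T) (R : Reversal T) (hR : a ∈ S (T.apply R))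
    {k : ℤ} (hk : ∀ R' : Reversal T, a ∈ S (T.apply R') → k ≤ R'.size) :
    MoV S T a ≤ -k := by
  rw [MoV, if_neg ha]
  refine neg_le_neg (le_csInf ⟨_, R, ?_, rfl⟩ ?_)
  · simp [IsMoVWitness, ha, hR]
  · rintro _ ⟨R', h, rfl⟩
    apply hk
    simpa [IsMoVWitness, ha] using h

/-- The tournament in which `0` beats `2` and `3` with full weight `n`, `1` beats `0` and `2`
beats `1` with full weight, and `1`, `2` have weight `q`, `t` respectively against `3`. -/
def exT (n q t : ℕ) (hq : q ≤ n) (ht : t ≤ n) : WTournament (Fin 4) n where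
  w := !![0, 0, n, n; n, 0, 0, q; 0, n, 0, t; 0, n - q, n - t, 0]
  diag x := by fin_cases x <;> rfl
  nonneg x y h := by
    fin_cases x <;> fin_cases y <;> simp [hq, ht]
  compl x y h := by
    fin_cases x <;> fin_cases y <;> simp at h ⊢

/-- The reversal that shifts weight `k` in favour of `a` on the pair `(a, b)`. -/
def pairRev {V : Type} {n : ℕ} [DecidableEq V] (T : WTournament V n) (a b : V) (hab : a ≠ b)
    (k : ℕ) (hk : T.w a b + k ≤ n) : Reversal T where
  r p q := k * singleFun a b p q
  antisymm p q := by
    unfold singleFun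
    grind
  lo p q h := by
    have := T.nonneg p q h
    have := T.compl a b hab
    unfold singleFun
    grind
  hi p q h := by
    have := T.nonneg q p h.symm
    have := T.compl p q h
    unfold singleFun
    grind

theorem MoV_one_le (n q t : ℕ) (hq : q < n) (ht : t ≤ n) :
    MoV BO (exT n q t hq.le ht) 1 ≤ -((n : ℤ) - q) := by
  refine MoV_le_neg ?_ (pairRev _ 1 3 (by decide) (n - q) ?_) ?_ ?_
  · intro h
    have := h 0
    simp [sBO, exT, Fin.sum_univ_four] at this
    omega
  · simp [exT]
    omega
  · intro y
    fin_cases y <;>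
      simp [sBO, apply, pairRev, singleFun, exT, Fin.sum_univ_four] <;> omega
  · intro R h
    have h0 := h 0
    -- `w(1, 0) = n` already, so a reversal cannot favour `1` on this pair.
    have h1 := R.hi 1 0 (by decide)
    have a00 := R.antisymm 0 0
    have a11 := R.antisymm 1 1
    have a01 := R.antisymm 0 1
    simp [sBO, apply, exT, Fin.sum_univ_four] at h0 h1
    have hn (x y : Fin 4) : 0 ≤ max (R.r x y) 0 := le_max_right _ _
    have hr (x y : Fin 4) : R.r x y ≤ max (R.r x y) 0 := le_max_left _ _
    simp only [Reversal.size, Fin.sum_univ_four]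
    -- The gap is closed by the gains of `1` against `2`, `3` and the losses of `0` against them.
    linarith [hr 1 2, hr 1 3, hr 2 0, hr 3 0, R.antisymm 0 2, R.antisymm 0 3, hn 0 0, hn 0 1,
      hn 0 2, hn 0 3, hn 1 0, hn 1 1, hn 2 1, hn 2 2, hn 2 3, hn 3 1, hn 3 2, hn 3 3]

theorem le_MoV_two (n q t k : ℕ) (hq : q ≤ n) (ht : t < n) (hk : k ≤ n)
    (h0 : n ≤ t + 2 * k) (h1 : q ≤ t + k) (h3 : n ≤ q + 2 * t + k) :
    -(k : ℤ) ≤ MoV BO (exT n q t hq ht.le) 2 := by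
  have hw : (exT n q t hq ht.le).w 2 0 + k ≤ n := by simpa [exT] using hk
  have hs : (pairRev _ 2 0 (by decide) k hw).size = k := by
    simp [Reversal.size, pairRev, singleFun, Fin.sum_univ_four]
  rw [← hs]
  apply neg_size_le_MoV
  · intro h
    have := h 0
    simp [sBO, exT, Fin.sum_univ_four] at this
    omega
  · intro y
    fin_cases y <;>
      simp [sBO, apply, pairRev, singleFun, exT, Fin.sum_univ_four] <;> omega

end WTournament

/-- `MoV_BO` satisfies neither w-degree-consistency nor
equal-w-degree-consistency. -/
theorem MoV_BO_not_degree_consistent :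
    (∃ (n m : ℕ) (T : WTournament (Fin m) n) (x y : Fin m),
      T.wdeg y < T.wdeg x ∧
      WTournament.MoV WTournament.BO T x < WTournament.MoV WTournament.BO T y) ∧
    (∃ (n m : ℕ) (T : WTournament (Fin m) n) (x y : Fin m),
      T.wdeg x = T.wdeg y ∧
      WTournament.MoV WTournament.BO T x ≠ WTournament.MoV WTournament.BO T y) := by
  refine ⟨⟨5, 4, WTournament.exT 5 2 1 (by decide) (by decide), 1, 2, ?_, ?_⟩,
    ⟨3, 4, WTournament.exT 3 1 1 (by decide) (by decide), 1, 2, ?_, ?_⟩⟩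
  · simp [WTournament.wdeg, WTournament.exT, Fin.sum_univ_four]
  · have hx := WTournament.MoV_one_le 5 2 1 (by decide) (by decide)
    have hy := WTournament.le_MoV_two 5 2 1 2 (by decide) (by decide) (by decide) (by decide)
      (by decide) (by decide)
    push_cast at hx hy
    linarith
  · simp [WTournament.wdeg, WTournament.exT, Fin.sum_univ_four]
  · have hx := WTournament.MoV_one_le 3 1 1 (by decide) (by decide)
    have hy := WTournament.le_MoV_two 3 1 1 1 (by decide) (by decide) (by decide) (by decide)
      (by decide) (by decide)
    push_cast at hx hy
    apply ne_of_lt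
    linarith
end

section
/- Let T=(V,w) be an n-weighted tournament and x,y∈V distinct. Then (y,x) is an edge of M_D if and only if m_T(y,x)>0 and m_T(y,x) > P_T[x,y], where P_T[x,y] is the maximum strength of a directed path from x to y in the margin graph (taken to be 0 if no such path exists). Consequently, SC(T) = { x∈V : for all y, m_T(y,x) ≤ 0 or m_T(y,x) ≤ P_T[x,y] }. -/
namespace WTournament

variable {V : Type} {n : ℕ}

/-- `p` is a directed path from `x` to `y` in the margin graph. -/
def IsPathFrom (T : WTournament V n) (p : List V) (x y : V) : Prop :=
  p.head? = some x ∧ p.getLast? = some y ∧ ∀ e ∈ seqEdges p, 0 < T.margin e.1 e.2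

/-- The strength of a path: the minimum margin along its edges. -/
def pathStrength (T : WTournament V n) (p : List V) : ℤ :=
  ((seqEdges p).map fun e => T.margin e.1 e.2).foldr min (n : ℤ)

/-- `P_T[x,y]`: the maximum strength of a directed path from `x` to `y` in the
margin graph (`0` if no such path exists). -/
noncomputable def PT (T : WTournament V n) (x y : V) : ℤ :=
  sSup (insert 0
    {s : ℤ | ∃ p : List V, T.IsPathFrom p x y ∧ 2 ≤ p.length ∧ T.pathStrength p = s})

end WTournament

namespace WTournament

theorem seqEdges_cons_cons {V : Type} (a b : V) (l : List V) :
    seqEdges (a :: b :: l) = (a, b) :: seqEdges (b :: l) := rfl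

theorem forall_seqEdges_iff {V : Type} (R : V → V → Prop) (l : List V) :
    (∀ e ∈ seqEdges l, R e.1 e.2) ↔ l.IsChain R := by
  induction l with
  | nil => simp [seqEdges]
  | cons a l ih =>
    cases l with
    | nil => simp [seqEdges]
    | cons b l =>
      rw [seqEdges_cons_cons, List.forall_mem_cons, List.isChain_cons_cons, ih]

theorem exists_split_of_mem_seqEdges {V : Type} {y x : V} {l : List V}
    (h : (y, x) ∈ seqEdges l) : ∃ a b, l = a ++ y :: x :: b := by
  induction l with
  | nil => simp [seqEdges] at h
  | cons c l ih =>
    cases l with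
    | nil => simp [seqEdges] at h
    | cons d l =>
      rw [seqEdges_cons_cons, List.mem_cons] at h
      rcases h with h | h
      · obtain ⟨rfl, rfl⟩ := Prod.mk.inj h
        exact ⟨[], l, rfl⟩
      · obtain ⟨a, b, hab⟩ := ih h
        exact ⟨c :: a, b, by rw [hab]; rfl⟩

theorem le_foldr_min_iff (k c : ℤ) (l : List ℤ) :
    k ≤ l.foldr min c ↔ k ≤ c ∧ ∀ e ∈ l, k ≤ e := by
  induction l with
  | nil => simp
  | cons a l ih => simp only [List.foldr_cons, le_min_iff, ih, List.forall_mem_cons]; tauto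

variable {V : Type} {n : ℕ}

theorem le_pathStrength_iff (T : WTournament V n) (k : ℤ) (p : List V) :
    k ≤ T.pathStrength p ↔ k ≤ n ∧ p.IsChain fun a b => k ≤ T.margin a b := by
  rw [pathStrength, le_foldr_min_iff, List.forall_mem_map, ← forall_seqEdges_iff]

theorem margin_le (T : WTournament V n) (x y : V) : T.margin x y ≤ n := by
  unfold margin
  by_cases h : x = y
  · subst h; simp
  · have := T.compl x y h
    have := T.nonneg y x (Ne.symm h)
    omega

/-- A positive `k ≤ n` is at most `P_T[x,y]` iff some path from `x` to `y` uses only edges of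
margin at least `k`. The bound `k > 0` excludes the default value `0` of `P_T[x,y]`. -/
theorem le_PT_iff (T : WTournament V n) {k : ℤ} (hk : 0 < k) (hkn : k ≤ n) (x y : V) :
    k ≤ T.PT x y ↔ ∃ p : List V, p.head? = some x ∧ p.getLast? = some y ∧ 2 ≤ p.length ∧
      p.IsChain fun a b => k ≤ T.margin a b := by
  have hbdd : BddAbove (insert 0
      {s : ℤ | ∃ p : List V, T.IsPathFrom p x y ∧ 2 ≤ p.length ∧ T.pathStrength p = s}) := by
    refine ⟨n, ?_⟩
    rintro s (rfl | ⟨p, -, -, rfl⟩)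
    · positivity
    · exact ((T.le_pathStrength_iff _ p).1 le_rfl).1
  constructor
  · intro h
    rcases Int.csSup_mem (Set.insert_nonempty _ _) hbdd with h0 | ⟨p, hp, hl, hs⟩
    · exact absurd (h.trans_eq h0) (not_le.2 hk)
    · exact ⟨p, hp.1, hp.2.1, hl, ((T.le_pathStrength_iff k p).1 (h.trans_eq hs.symm)).2⟩
  · rintro ⟨p, hh, hlast, hl, hc⟩
    refine ((T.le_pathStrength_iff k p).2 ⟨hkn, hc⟩).trans
      (le_csSup hbdd (Or.inr ⟨p, ⟨hh, hlast, ?_⟩, hl, rfl⟩))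
    exact (forall_seqEdges_iff (fun a b => 0 < T.margin a b) p).2
      (hc.imp fun _ _ h => hk.trans_le h)

/-- Removing an edge `(y, x)` from a closed sequence of `R`-steps leaves, after rotation, a sequence
of `R`-steps from `x` to `y`. -/
theorem exists_path_of_cycle (R : V → V → Prop) {x y : V} (hxy : x ≠ y) {a b : List V}
    (hcl : (a ++ y :: x :: b).head? = (a ++ y :: x :: b).getLast?)
    (hc : (a ++ y :: x :: b).IsChain R) :
    ∃ p : List V, p.head? = some x ∧ p.getLast? = some y ∧ 2 ≤ p.length ∧ p.IsChain R := by
  have hxb : (x :: b).IsChain R := by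
    have := (List.isChain_append.1 hc).2.1
    exact (List.isChain_cons_cons.1 this).2
  cases a with
  | nil =>
    refine ⟨x :: b, rfl, by simpa using hcl.symm, ?_, hxb⟩
    cases b with
    | nil => exact absurd (by simpa using hcl.symm) hxy
    | cons _ _ => simp
  | cons c a =>
    -- The cycle starts and ends at `c`, so `x, …, c` continues with `a` up to `y`.
    have hlast : (x :: b).getLast? = some c := by
      have h : c :: a ++ y :: x :: b = (c :: (a ++ [y])) ++ (x :: b) := by simp
      rw [h, List.getLast?_append_of_ne_nil _ (List.cons_ne_nil _ _)] at hcl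
      exact hcl.symm
    have hca : (c :: (a ++ [y])).IsChain R := by
      have h : (c :: a ++ y :: x :: b) = (c :: (a ++ [y])) ++ (x :: b) := by simp
      rw [h] at hc
      exact (List.isChain_append.1 hc).1
    refine ⟨(x :: b) ++ (a ++ [y]), rfl, ?_, by simp; omega, ?_⟩
    · rw [← List.append_assoc, List.getLast?_append_of_ne_nil _ (List.cons_ne_nil _ _)]
      rfl
    refine List.isChain_append.2 ⟨hxb, (List.isChain_cons.1 hca).2, ?_⟩
    intro u hu v hv
    rw [hlast] at hu
    obtain rfl : c = u := by simpa using hu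
    exact (List.isChain_cons.1 hca).1 v hv

theorem edgeMD_iff (T : WTournament V n) (x y : V) :
    T.EdgeMD y x ↔ 0 < T.margin y x ∧ T.PT x y < T.margin y x := by
  refine and_congr_right fun hpos => ?_
  rw [← not_le, not_iff_not, T.le_PT_iff hpos (T.margin_le y x)]
  constructor
  · rintro ⟨l, ⟨-, hcl, -⟩, hmem, hsplit⟩
    have hxy : x ≠ y := by
      rintro rfl
      simp [margin] at hpos
    have hc := ((T.le_pathStrength_iff _ l).1 hsplit.le).2
    obtain ⟨a, b, rfl⟩ := exists_split_of_mem_seqEdges hmem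
    exact exists_path_of_cycle _ hxy hcl hc
  · rintro ⟨p, hh, hlast, hl, hc⟩
    obtain ⟨b, rfl⟩ : ∃ b, p = x :: b := by
      cases p with
      | nil => simp at hh
      | cons c b => exact ⟨b, by simpa using hh⟩
    have hc' : (y :: x :: b).IsChain fun u v => T.margin y x ≤ T.margin u v :=
      List.isChain_cons_cons.2 ⟨le_rfl, hc⟩
    refine ⟨y :: x :: b, ⟨by simp, by simpa using hlast.symm, ?_⟩, ?_, ?_⟩
    · exact (forall_seqEdges_iff (fun u v => 0 < T.margin u v) _).2
        (hc'.imp fun _ _ h => hpos.trans_le h)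
    · simp [seqEdges_cons_cons]
    · refine le_antisymm ((T.le_pathStrength_iff _ _).2 ⟨T.margin_le y x, hc'⟩) ?_
      simp [splitNum, seqEdges_cons_cons]

end WTournament

/-- `(y, x)` is an edge of `M_D` iff `m_T(y,x) > 0` and
`m_T(y,x) > P_T[x,y]`; consequently the Split Cycle winners are exactly the
alternatives `v` with `m_T(u,v) ≤ 0` or `m_T(u,v) ≤ P_T[v,u]` for all `u`. -/
theorem splitCycle_strongest_path_characterization {V : Type} {n : ℕ}
    (T : WTournament V n) (x y : V) (hxy : x ≠ y) :
    (T.EdgeMD y x ↔ 0 < T.margin y x ∧ T.PT x y < T.margin y x) ∧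
    T.SC = {v | ∀ u, T.margin u v ≤ 0 ∨ T.margin u v ≤ T.PT v u} := by
  refine ⟨T.edgeMD_iff x y, ?_⟩
  ext v
  simp only [WTournament.SC, Set.mem_ofPred_eq, T.edgeMD_iff, not_and_or, not_lt]
end
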